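/- Assume B is bounded below on the closure of R(D) and that H = N(D) ⊕ closure(R(BD)) as a topological direct sum. Then B* is bounded below on the closure of R(D*): there exists c' > 0 such that ‖B*w‖ ≥ c'‖w‖ for all w in the closure of R(D*); consequently B* maps the closure of R(D*) isomorphically onto the closure of R(B*D*). -/

import Mathlib

noncomputable section

variable {X : Type*} [NormedAddCommGroup X] [NormedSpace ℂ X]

/-- A complex normed space is reflexive if the canonical inclusion into its double dual is
surjective. -/
def ReflexiveSpace (X : Type*) [NormedAddCommGroup X] [NormedSpace ℂ X] : Prop :=
  Function.Surjective (NormedSpace.inclusionInDoubleDual ℂ X)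

/-- The open bisector `S_ω = {z ≠ 0 : |arg z| < ω or |arg (-z)| < ω}`. -/
def Sector (ω : ℝ) : Set ℂ :=
  {z | z ≠ 0 ∧ (|Complex.arg z| < ω ∨ |Complex.arg (-z)| < ω)}

/-- The kernel of a partially defined operator, viewed as a subspace of the ambient space. -/
def pker (A : X →ₗ.[ℂ] X) : Submodule ℂ X :=
  (LinearMap.ker A.toFun).map A.domain.subtype

/-- The range of a partially defined operator. -/
def pran (A : X →ₗ.[ℂ] X) : Submodule ℂ X :=
  LinearMap.range A.toFun

/-- `X = N ⊕ M` as a topological direct sum: `N` and `M` are closed complementary subspaces. -/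
def IsTopDirectSum (N M : Submodule ℂ X) : Prop :=
  IsClosed (N : Set X) ∧ IsClosed (M : Set X) ∧ N ⊓ M = ⊥ ∧ N ⊔ M = ⊤

/-- `A` kernel/range decomposes: `X = N(A) ⊕ closure (R(A))` as a topological direct sum. -/
def KerRanDecomp (A : X →ₗ.[ℂ] X) : Prop :=
  IsTopDirectSum (pker A) (pran A).topologicalClosure

/-- A closed operator `A` is bisectorial of angle `ω` if for every `ω' ∈ (ω, π/2)` there is
`C > 0` such that for every `λ ∉ S_{ω'}` the map `I + λA : D(A) → X` is a bijection whose
inverse is bounded with norm at most `C`. -/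
def IsBisectorial (A : X →ₗ.[ℂ] X) (ω : ℝ) : Prop :=
  A.IsClosed ∧
    ∀ ω' ∈ Set.Ioo ω (Real.pi / 2), ∃ C > 0, ∀ lam : ℂ, lam ∉ Sector ω' →
      Function.Bijective (fun u : A.domain => (u : X) + lam • A u) ∧
        ∀ u : A.domain, ‖(u : X)‖ ≤ C * ‖(u : X) + lam • A u‖

/-- The operator `BD`, with domain `D(D)`, acting by `u ↦ B (D u)`. -/
def opBD (B : X →L[ℂ] X) (D : X →ₗ.[ℂ] X) : X →ₗ.[ℂ] X :=
  ⟨D.domain, (B : X →ₗ[ℂ] X).comp D.toFun⟩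

/-- The operator `DB`, with domain `{u : B u ∈ D(D)}`, acting by `u ↦ D (B u)`. -/
def opDB (B : X →L[ℂ] X) (D : X →ₗ.[ℂ] X) : X →ₗ.[ℂ] X :=
  ⟨D.domain.comap (B : X →ₗ[ℂ] X),
    D.toFun.comp ((B : X →ₗ[ℂ] X).restrict fun _ hx => hx)⟩

/-- `B` is bounded below on the set `S`. -/
def BoundedBelowOn (B : X →L[ℂ] X) (S : Set X) : Prop :=
  ∃ c > 0, ∀ u ∈ S, c * ‖u‖ ≤ ‖B u‖

/-!
With `N = N(D)` and `S` the closure of `R(D)`, the splitting together with the lower bound of `B` on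
`S` says that `N + B(S)` is all of `H`. Hence the compression `S → Nᗮ` of `B`, i.e. `B` followed by
the orthogonal projection onto `Nᗮ`, is onto. By the open mapping theorem its adjoint, which is the
compression `Nᗮ → S` of `B*`, is bounded below, and so is `B*` on `Nᗮ`. It remains to note that
`Nᗮ` contains `R(D*)`, and that an operator bounded below on a closed subspace maps it onto a closed
subspace.
-/

open scoped InnerProduct InnerProductSpace

theorem surjOn_orthogonalProjectionOnto_orthogonal_of_codisjoint {𝕜 E : Type*} [RCLike 𝕜]
    [NormedAddCommGroup E] [InnerProductSpace 𝕜 E] {N M : Submodule 𝕜 E}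
    [Nᗮ.HasOrthogonalProjection] (h : Codisjoint N M) :
    Set.SurjOn Nᗮ.orthogonalProjectionOnto M Set.univ := by
  intro w _
  obtain ⟨n, m, hn, hm, hw⟩ := Submodule.codisjoint_iff_exists_add_eq.1 h w
  refine ⟨m, hm, ?_⟩
  calc Nᗮ.orthogonalProjectionOnto m = Nᗮ.orthogonalProjectionOnto (n + m) := by
        rw [map_add, Submodule.orthogonalProjectionOnto_orthogonal_apply_eq_zero hn, zero_add]
    _ = w := by rw [hw, Submodule.orthogonalProjectionOnto_mem_subspace_eq_self]

section Adjoint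

variable {𝕜 E F : Type*} [RCLike 𝕜] [NormedAddCommGroup E] [InnerProductSpace 𝕜 E]
  [CompleteSpace E] [NormedAddCommGroup F] [InnerProductSpace 𝕜 F] [CompleteSpace F]

theorem exists_mul_norm_le_norm_adjoint_of_surjective {T : E →L[𝕜] F}
    (hT : Function.Surjective T) : ∃ c > 0, ∀ y, c * ‖y‖ ≤ ‖(T†) y‖ := by
  obtain ⟨C, hC, hpre⟩ := T.exists_preimage_norm_le hT
  refine ⟨C⁻¹, inv_pos.2 hC, fun y ↦ (inv_mul_le_iff₀ hC).2 ?_⟩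
  obtain ⟨x, rfl, hx⟩ := hpre y
  obtain hy | hy := (norm_nonneg (T x)).eq_or_lt
  · rw [← hy]
    positivity
  refine le_of_mul_le_mul_right ?_ hy
  calc ‖T x‖ * ‖T x‖ = RCLike.re ⟪(T†) (T x), x⟫_𝕜 := by
        rw [ContinuousLinearMap.adjoint_inner_left, inner_self_eq_norm_mul_norm]
    _ ≤ ‖(T†) (T x)‖ * ‖x‖ := re_inner_le_norm _ _
    _ ≤ ‖(T†) (T x)‖ * (C * ‖T x‖) := by gcongr
    _ = C * ‖(T†) (T x)‖ * ‖T x‖ := by ring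

theorem exists_mul_norm_le_norm_adjoint_of_codisjoint {T : E →L[𝕜] F} {S : Submodule 𝕜 E}
    [CompleteSpace S] {N : Submodule 𝕜 F} (h : Codisjoint N (S.map (T : E →ₗ[𝕜] F))) :
    ∃ c > 0, ∀ w ∈ Nᗮ, c * ‖w‖ ≤ ‖(T†) w‖ := by
  have hsurj : Function.Surjective (Nᗮ.orthogonalProjectionOnto ∘L T ∘L S.subtypeL) := fun w ↦ by
    obtain ⟨_, ⟨u, hu, rfl⟩, hw⟩ :=
      surjOn_orthogonalProjectionOnto_orthogonal_of_codisjoint h (Set.mem_univ w)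
    exact ⟨⟨u, hu⟩, hw⟩
  obtain ⟨c, hc, hbound⟩ := exists_mul_norm_le_norm_adjoint_of_surjective hsurj
  refine ⟨c, hc, fun w hw ↦ (hbound ⟨w, hw⟩).trans ?_⟩
  simp only [ContinuousLinearMap.adjoint_comp, Submodule.adjoint_subtypeL,
    Submodule.adjoint_orthogonalProjectionOnto]
  exact S.norm_orthogonalProjectionOnto_apply_le _

end Adjoint

namespace BoundedBelowOn

variable {B : X →L[ℂ] X} {S : Submodule ℂ X}

theorem exists_antilipschitzWith_comp_subtypeL (h : BoundedBelowOn B S) :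
    ∃ K, AntilipschitzWith K (B ∘L S.subtypeL) := by
  obtain ⟨c, hc, hbound⟩ := h
  refine ⟨⟨c⁻¹, (inv_pos.2 hc).le⟩, ContinuousLinearMap.antilipschitz_of_bound _ fun u ↦ ?_⟩
  exact (le_inv_mul_iff₀ hc).2 (hbound u u.2)

theorem injOn (h : BoundedBelowOn B S) : Set.InjOn B S := by
  obtain ⟨_, hanti⟩ := h.exists_antilipschitzWith_comp_subtypeL
  exact Set.injOn_iff_injective.2 hanti.injective

theorem isClosed_image [CompleteSpace S] (h : BoundedBelowOn B S) :
    IsClosed (B '' (S : Set X)) := by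
  obtain ⟨_, hanti⟩ := h.exists_antilipschitzWith_comp_subtypeL
  rw [Set.image_eq_range]
  exact hanti.isClosed_range (B ∘L S.subtypeL).uniformContinuous

theorem map_topologicalClosure [CompleteSpace X]
    (h : BoundedBelowOn B (S.topologicalClosure : Set X)) :
    S.topologicalClosure.map (B : X →ₗ[ℂ] X) = (S.map (B : X →ₗ[ℂ] X)).topologicalClosure := by
  refine le_antisymm (S.topologicalClosure_map B) ?_
  exact Submodule.topologicalClosure_minimal _ (Submodule.map_mono S.le_topologicalClosure)
    h.isClosed_image

end BoundedBelowOn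

theorem pran_opBD (B : X →L[ℂ] X) (D : X →ₗ.[ℂ] X) :
    pran (opBD B D) = (pran D).map (B : X →ₗ[ℂ] X) :=
  LinearMap.range_comp _ _

section Hilbert

variable {H : Type*} [NormedAddCommGroup H] [InnerProductSpace ℂ H] [CompleteSpace H]

theorem topologicalClosure_pran_adjoint_le_orthogonal_pker {D : H →ₗ.[ℂ] H}
    (hdense : Dense (D.domain : Set H)) :
    (pran D.adjoint).topologicalClosure ≤ (pker D)ᗮ := by
  refine Submodule.topologicalClosure_minimal _ ?_ (Submodule.isClosed_orthogonal _)
  rintro _ ⟨y, rfl⟩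
  rw [Submodule.mem_orthogonal']
  rintro _ ⟨u, hu : D u = 0, rfl⟩
  exact (D.adjoint_isFormalAdjoint hdense y u).trans (by rw [hu, inner_zero_right])

theorem stmt_9_general (D : H →ₗ.[ℂ] H) (hdense : Dense (D.domain : Set H)) (B : H →L[ℂ] H)
    (hcodisjoint : Codisjoint (pker D) ((pran D).topologicalClosure.map (B : H →ₗ[ℂ] H))) :
    ∃ c' > 0,
      (∀ w ∈ ((pran D.adjoint).topologicalClosure : Set H),
        c' * ‖w‖ ≤ ‖ContinuousLinearMap.adjoint B w‖) ∧
      Set.InjOn (ContinuousLinearMap.adjoint B)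
        ((pran D.adjoint).topologicalClosure : Set H) ∧
      (ContinuousLinearMap.adjoint B) '' ((pran D.adjoint).topologicalClosure : Set H)
        = ((pran (opBD (ContinuousLinearMap.adjoint B) D.adjoint)).topologicalClosure :
            Set H) := by
  obtain ⟨c, hc, hbound⟩ := exists_mul_norm_le_norm_adjoint_of_codisjoint hcodisjoint
  have hbound' : ∀ w ∈ ((pran D.adjoint).topologicalClosure : Set H), c * ‖w‖ ≤ ‖(B†) w‖ :=
    fun w hw ↦ hbound w (topologicalClosure_pran_adjoint_le_orthogonal_pker hdense hw)
  have hlow : BoundedBelowOn (B†) ((pran D.adjoint).topologicalClosure : Set H) :=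
    ⟨c, hc, hbound'⟩
  refine ⟨c, hc, hbound', hlow.injOn, ?_⟩
  rw [pran_opBD, ← hlow.map_topologicalClosure]
  rfl

end Hilbert

/-- (Hilbert space.) If `B` is bounded below on the closure of `R(D)` and
`H = N(D) ⊕ closure (R(BD))` as a topological direct sum, then `B*` is bounded below on the
closure of `R(D*)`, and consequently `B*` maps `closure (R(D*))` isomorphically onto
`closure (R(B*D*))`. -/
theorem stmt_9 {H : Type*} [NormedAddCommGroup H] [InnerProductSpace ℂ H] [CompleteSpace H]
    (D : H →ₗ.[ℂ] H) (hD : D.IsClosed) (hdense : Dense (D.domain : Set H)) (B : H →L[ℂ] H)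
    (hlow : BoundedBelowOn B ((pran D).topologicalClosure : Set H))
    (hsplit : IsTopDirectSum (pker D) (pran (opBD B D)).topologicalClosure) :
    ∃ c' > 0,
      (∀ w ∈ ((pran D.adjoint).topologicalClosure : Set H),
        c' * ‖w‖ ≤ ‖ContinuousLinearMap.adjoint B w‖) ∧
      Set.InjOn (ContinuousLinearMap.adjoint B)
        ((pran D.adjoint).topologicalClosure : Set H) ∧
      (ContinuousLinearMap.adjoint B) '' ((pran D.adjoint).topologicalClosure : Set H)
        = ((pran (opBD (ContinuousLinearMap.adjoint B) D.adjoint)).topologicalClosure :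
            Set H) := by
  refine stmt_9_general D hdense B ?_
  rw [hlow.map_topologicalClosure, ← pran_opBD]
  exact codisjoint_iff.2 hsplit.2.2.2
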